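/- Let m ≤ n be positive integers and let L ⊆ M(m,n) be a complex linear subspace of dimension n−m+1 such that every nonzero matrix in L has rank m. Then for every matrix A ∈ M(m,n), the set {l ∈ L : rank(A + l) < m} is finite and nonempty. -/

import Mathlib

/-!
By Krull's height theorem and the Nullstellensatz, fewer linear equations than the dimension of an
affine cone always have a nonzero common solution on it. This is applied to two cones.

* The pairs `(c, l)` in `K × L` with `rank (c A + l) < m` form a cone which, by transversality,
  meets the hyperplane `c = 0` only at the origin. It is therefore a union of lines, each of them an
  irreducible component, hence there are finitely many; the eigenvalue locus is its slice `c = 1`.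
* The cone of rank-one tensors in `U ⊗ V` has dimension at least `dim U + dim V - 1`, so a bilinear
  map `U × V → W` with `dim W + 1 < dim U + dim V` has a zero `(u, v)` with `u, v ≠ 0`. For
  `(x, (c, l)) ↦ xᵀ (c A + l)` such a zero has `c ≠ 0` by transversality, and `c⁻¹ l` is then a
  point of the eigenvalue locus.
-/

open MvPolynomial Module Matrix

section Height

variable {R : Type*} [CommRing R] {I p q : Ideal R}

theorem height_map_quotientMk_add_one_le [p.IsPrime] [q.IsPrime] (hIp : I ≤ p) (hpq : p < q) :
    (p.map (Ideal.Quotient.mk I)).height + 1 ≤ (q.map (Ideal.Quotient.mk I)).height := by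
  have := Ideal.isPrime_map_quotientMk_of_isPrime hIp
  have := Ideal.isPrime_map_quotientMk_of_isPrime (hIp.trans hpq.le)
  refine Ideal.height_add_one_le_of_lt_of_isPrime (lt_of_le_not_ge (Ideal.map_mono hpq.le) ?_)
  intro hle
  have := Ideal.comap_mono (f := Ideal.Quotient.mk I) hle
  rw [Ideal.comap_map_mk hIp, Ideal.comap_map_mk (hIp.trans hpq.le)] at this
  exact hpq.not_ge this

theorem exists_isPrime_lt_of_card_lt_height [IsNoetherianRing R] [p.IsPrime] {s : Finset R}
    (hs : ↑s ⊆ (p : Set R)) (hcard : s.card < p.height) :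
    ∃ q : Ideal R, q.IsPrime ∧ ↑s ⊆ (q : Set R) ∧ q < p := by
  obtain ⟨q, hq, hqp⟩ := Ideal.exists_minimalPrimes_le (Ideal.span_le.mpr hs)
  refine ⟨q, hq.1.1, Ideal.span_le.mp hq.1.2, lt_of_le_of_ne hqp ?_⟩
  rintro rfl
  exact hcard.not_ge (Ideal.height_le_card_of_mem_minimalPrimes_span_finset hq)

theorem exists_isPrime_lt_of_card_lt_height_map_quotientMk [IsNoetherianRing R] [p.IsPrime]
    (hIp : I ≤ p) {s : Finset R} (hs : ↑s ⊆ (p : Set R))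
    (hcard : s.card < (p.map (Ideal.Quotient.mk I)).height) :
    ∃ q : Ideal R, q.IsPrime ∧ I ≤ q ∧ ↑s ⊆ (q : Set R) ∧ q < p := by
  classical
  have := Ideal.isPrime_map_quotientMk_of_isPrime hIp
  obtain ⟨q, hq, hsq, hqp⟩ := exists_isPrime_lt_of_card_lt_height
    (p := p.map (Ideal.Quotient.mk I)) (s := s.image (Ideal.Quotient.mk I))
    (by
      rw [Finset.coe_image, Set.image_subset_iff]
      exact hs.trans Ideal.le_comap_map)
    (lt_of_le_of_lt (by exact_mod_cast Finset.card_image_le) hcard)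
  refine ⟨q.comap (Ideal.Quotient.mk I), Ideal.comap_isPrime _ _, ?_, ?_, ?_⟩
  · simpa using Ideal.ker_le_comap (K := q) (Ideal.Quotient.mk I)
  · simpa using hsq
  · rw [← Ideal.comap_map_mk hIp]
    exact (Ideal.orderEmbeddingOfSurjective _ Ideal.Quotient.mk_surjective).lt_iff_lt.mpr hqp

end Height

section LinearSection

theorem idealOfVars_eq_ker_constantCoeff {σ R : Type*} [CommSemiring R] :
    idealOfVars σ R = RingHom.ker (constantCoeff : MvPolynomial σ R →+* R) := by
  ext f
  simpa [constantCoeff_eq, Finsupp.degree_eq_zero_iff] using mem_pow_idealOfVars_iff' (R := R) 1 f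

instance isPrime_idealOfVars {σ R : Type*} [CommRing R] [IsDomain R] :
    (idealOfVars σ R).IsPrime := by
  rw [idealOfVars_eq_ker_constantCoeff]
  exact RingHom.ker_isPrime _

theorem aeval_toMvPolynomial_basisFun {R σ τ W : Type*} [CommRing R] [AddCommGroup W] [Module R W]
    [Fintype σ] [DecidableEq σ] [Finite τ] (φ : (σ → R) →ₗ[R] W) (b : Basis τ R W) (k : τ)
    (z : σ → R) : aeval z (φ.toMvPolynomial (Pi.basisFun R σ) b k) = b.repr (φ z) k := by
  have h := φ.toMvPolynomial_eval_eq_apply (Pi.basisFun R σ) b k ((Pi.basisFun R σ).repr z)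
  rwa [LinearEquiv.symm_apply_apply] at h

variable {K σ : Type*} [Field K] [IsAlgClosed K] [Finite σ]

theorem exists_ne_zero_mem_zeroLocus {q : Ideal (MvPolynomial σ K)} [q.IsPrime]
    (hq : q < idealOfVars σ K) : ∃ z ∈ zeroLocus K q, z ≠ 0 := by
  by_contra! hzero
  refine hq.not_ge (Ideal.span_le.mpr ?_)
  rintro _ ⟨i, rfl⟩
  rw [SetLike.mem_coe, ← IsPrime.vanishingIdeal_zeroLocus (K := K) q, mem_vanishingIdeal_iff]
  intro z hz
  simp [hzero z hz]

theorem exists_ne_zero_mem_zeroLocus_of_finrank_lt_height {W : Type*} [AddCommGroup W] [Module K W]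
    [FiniteDimensional K W] {I : Ideal (MvPolynomial σ K)} (hI : I ≤ idealOfVars σ K)
    (φ : (σ → K) →ₗ[K] W)
    (hφ : finrank K W < ((idealOfVars σ K).map (Ideal.Quotient.mk I)).height) :
    ∃ z ∈ zeroLocus K I, z ≠ 0 ∧ φ z = 0 := by
  classical
  have := Fintype.ofFinite σ
  let b := finBasis K W
  let coord := φ.toMvPolynomial (Pi.basisFun K σ) b
  obtain ⟨q, hq, hIq, hcoord, hlt⟩ := exists_isPrime_lt_of_card_lt_height_map_quotientMk hI
    (s := Finset.univ.image coord)
    (by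
      rw [idealOfVars_eq_ker_constantCoeff]
      simp [Set.range_subset_iff, coord])
    (lt_of_le_of_lt (by exact_mod_cast Finset.card_image_le.trans (by simp)) hφ)
  obtain ⟨z, hz, hz0⟩ := exists_ne_zero_mem_zeroLocus hlt
  refine ⟨z, zeroLocus_anti_mono hIq hz, hz0, b.repr.map_eq_zero_iff.mp (Finsupp.ext fun k => ?_)⟩
  rw [← aeval_toMvPolynomial_basisFun]
  exact hz _ (hcoord (Finset.mem_image_of_mem coord (Finset.mem_univ k)))

end LinearSection

section ConeSection

variable {K σ : Type*} [Field K]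

/-- Restriction of polynomials to the parametrized line `t ↦ t • z` through the origin. -/
noncomputable def lineHom (z : σ → K) : MvPolynomial σ K →ₐ[K] Polynomial K :=
  aeval fun i => Polynomial.C (z i) * Polynomial.X

/-- The ideal of the line spanned by `z` (of the origin if `z = 0`), encoded as a kernel so that it
is visibly prime. -/
noncomputable def lineIdeal (z : σ → K) : Ideal (MvPolynomial σ K) :=
  RingHom.ker (lineHom z)

instance isPrime_lineIdeal (z : σ → K) : (lineIdeal z).IsPrime :=
  RingHom.ker_isPrime _

theorem mem_lineIdeal_iff [Infinite K] {z : σ → K} {f : MvPolynomial σ K} :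
    f ∈ lineIdeal z ↔ ∀ c : K, aeval (c • z) f = 0 := by
  have eval_lineHom (c : K) : (lineHom z f).eval c = aeval (c • z) f := by
    have h : (Polynomial.aeval c).comp (lineHom z) = aeval (c • z) := by
      ext1 i
      simp [lineHom, mul_comm c]
    simpa only [AlgHom.comp_apply, Polynomial.coe_aeval_eq_eval] using DFunLike.congr_fun h f
  simp_rw [lineIdeal, RingHom.mem_ker, ← eval_lineHom]
  exact ⟨fun h c => by simp [h], fun h => Polynomial.funext (by simpa using h)⟩

theorem lineIdeal_lt_idealOfVars [Infinite K] {z : σ → K} (hz : z ≠ 0) :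
    lineIdeal z < idealOfVars σ K := by
  obtain ⟨i, hi⟩ := Function.ne_iff.mp hz
  refine lt_of_le_not_ge (fun f hf => ?_) fun hle => hi ?_
  · rw [idealOfVars_eq_ker_constantCoeff, RingHom.mem_ker]
    simpa using mem_lineIdeal_iff.mp hf 0
  · simpa using mem_lineIdeal_iff.mp (hle (Ideal.subset_span ⟨i, rfl⟩)) 1

theorem eq_of_lineIdeal_eq [Infinite K] {z w : σ → K} {i : σ} (hz : z i = 1) (hw : w i = 1)
    (h : lineIdeal z = lineIdeal w) : z = w := by
  funext j
  have hmem : X j - C (z j) * X i ∈ lineIdeal z := by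
    simp [mem_lineIdeal_iff, hz, mul_comm]
  have hw0 := mem_lineIdeal_iff.mp (h ▸ hmem) 1
  simpa [hw, sub_eq_zero, eq_comm] using hw0

variable [IsAlgClosed K] [Finite σ] {I : Ideal (MvPolynomial σ K)} {i : σ}

-- A strictly smaller prime over `I` would define a cone of dimension at least two, which meets the
-- hyperplane `z i = 0` outside the origin.
theorem lineIdeal_mem_minimalPrimes
    (hcone : ∀ z ∈ zeroLocus K I, ∀ c : K, c • z ∈ zeroLocus K I)
    (hinf : ∀ z ∈ zeroLocus K I, z i = 0 → z = 0) {z : σ → K} (hz : z ∈ zeroLocus K I)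
    (hz0 : z ≠ 0) : lineIdeal z ∈ I.minimalPrimes := by
  have hIz : I ≤ lineIdeal z := fun f hf => mem_lineIdeal_iff.mpr fun c => hcone z hz c f hf
  obtain ⟨q, hq, hqz⟩ := Ideal.exists_minimalPrimes_le hIz
  have := hq.1.1
  suffices q = lineIdeal z from this ▸ hq
  by_contra hne
  have hlt := lineIdeal_lt_idealOfVars hz0
  have hheight : finrank K K < ((idealOfVars σ K).map (Ideal.Quotient.mk q)).height := by
    have h₁ := height_map_quotientMk_add_one_le le_rfl (lt_of_le_of_ne hqz hne)
    have h₂ := height_map_quotientMk_add_one_le hqz hlt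
    rw [finrank_self, ← ENat.add_one_le_iff (by simp)]
    refine le_trans ?_ h₂
    gcongr
    exact le_trans (by simp) h₁
  obtain ⟨w, hw, hw0, hwi⟩ := exists_ne_zero_mem_zeroLocus_of_finrank_lt_height
    (hqz.trans hlt.le) (LinearMap.proj i) hheight
  exact hw0 (hinf w (zeroLocus_anti_mono hq.1.2 hw) hwi)

theorem finite_setOf_mem_zeroLocus_coord_eq_one
    (hcone : ∀ z ∈ zeroLocus K I, ∀ c : K, c • z ∈ zeroLocus K I)
    (hinf : ∀ z ∈ zeroLocus K I, z i = 0 → z = 0) :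
    {z ∈ zeroLocus K I | z i = 1}.Finite := by
  refine Set.Finite.of_injOn (f := lineIdeal) (t := I.minimalPrimes) ?_ ?_
    (I.finite_minimalPrimes_of_isNoetherianRing _)
  · rintro z ⟨hz, hzi⟩
    exact lineIdeal_mem_minimalPrimes hcone hinf hz (by rintro rfl; simp at hzi)
  · rintro z ⟨-, hz⟩ w ⟨-, hw⟩ h
    exact eq_of_lineIdeal_eq hz hw h

end ConeSection

section Segre

variable {R ι κ : Type*} [CommRing R]

open Classical in
/-- Pullback of polynomials along the Segre parametrization `(x, y) ↦ (x i * y j)` of the rank-one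
tensors, restricted to the pairs `(x, y)` whose coordinates in `T` are zero. -/
noncomputable def segreHom (T : Set (ι ⊕ κ)) :
    MvPolynomial (ι × κ) R →ₐ[R] MvPolynomial (ι ⊕ κ) R :=
  (aeval fun v => if v ∈ T then 0 else X v).comp
    (aeval fun p => X (Sum.inl p.1) * X (Sum.inr p.2))

/-- The prime ideal of the closure of the cone of rank-one tensors `x ⊗ y` for which the coordinates
of `(x, y)` in `T` are zero. Enlarging `T` one coordinate at a time gives a chain of primes from the
ideal `segreIdeal R ∅` of the Segre cone up to that of the origin. -/
noncomputable def segreIdeal (R : Type*) [CommRing R] (T : Set (ι ⊕ κ)) :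
    Ideal (MvPolynomial (ι × κ) R) :=
  RingHom.ker (segreHom T : MvPolynomial (ι × κ) R →ₐ[R] MvPolynomial (ι ⊕ κ) R)

theorem segreIdeal_mono : Monotone (segreIdeal R : Set (ι ⊕ κ) → _) := by
  classical
  intro T T' hT f hf
  have hcomp : (segreHom T' : MvPolynomial (ι × κ) R →ₐ[R] _) =
      (aeval fun v => if v ∈ T' then 0 else X v).comp (segreHom T) := by
    rw [segreHom, segreHom, ← AlgHom.comp_assoc]
    congr 1
    ext1 v
    by_cases hv : v ∈ T
    · simp [hv, hT hv]
    · simp [hv]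
  rw [segreIdeal, RingHom.mem_ker] at hf ⊢
  rw [hcomp, AlgHom.comp_apply, hf, map_zero]

theorem segreIdeal_univ : segreIdeal R (Set.univ : Set (ι ⊕ κ)) = idealOfVars (ι × κ) R := by
  have h : (segreHom Set.univ : MvPolynomial (ι × κ) R →ₐ[R] MvPolynomial (ι ⊕ κ) R) =
      aeval 0 := by
    ext1 p
    simp [segreHom]
  ext f
  rw [segreIdeal, RingHom.mem_ker, h, aeval_zero, idealOfVars_eq_ker_constantCoeff, RingHom.mem_ker]
  exact C_eq_zero

variable [IsDomain R]

instance isPrime_segreIdeal (T : Set (ι ⊕ κ)) : (segreIdeal R T).IsPrime :=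
  RingHom.ker_isPrime _

theorem X_mem_segreIdeal_iff {T : Set (ι ⊕ κ)} {i : ι} {j : κ} :
    X (i, j) ∈ segreIdeal R T ↔ Sum.inl i ∈ T ∨ Sum.inr j ∈ T := by
  simp [segreIdeal, segreHom, RingHom.mem_ker, or_iff_not_imp_right]

theorem segreIdeal_lt {T T' : Set (ι ⊕ κ)} (hT : T ⊆ T') {i : ι} {j : κ}
    (hi : Sum.inl i ∉ T) (hj : Sum.inr j ∉ T) (hij : Sum.inl i ∈ T' ∨ Sum.inr j ∈ T') :
    segreIdeal R T < segreIdeal R T' :=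
  lt_of_le_not_ge (segreIdeal_mono hT) fun hle =>
    (X_mem_segreIdeal_iff.mp (hle (X_mem_segreIdeal_iff.mpr hij))).elim hi hj

theorem card_le_height_map_segreIdeal (T : Finset (ι ⊕ κ)) {i : ι} {j : κ}
    (hi : Sum.inl i ∉ T) (hj : Sum.inr j ∉ T) :
    T.card ≤ ((segreIdeal R (T : Set (ι ⊕ κ))).map
      (Ideal.Quotient.mk (segreIdeal R ∅))).height := by
  classical
  induction T using Finset.induction with
  | empty => simp
  | insert v T hv ih =>
    rw [Finset.mem_insert, not_or] at hi hj
    have hlt : segreIdeal R (T : Set (ι ⊕ κ)) < segreIdeal R ↑(insert v T) := by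
      rcases v with i' | j'
      · exact segreIdeal_lt (by simp) (i := i') (j := j) (by simpa) (by simpa using hj.2) (by simp)
      · exact segreIdeal_lt (by simp) (i := i) (j := j') (by simpa using hi.2) (by simpa) (by simp)
    rw [Finset.card_insert_of_notMem hv, Nat.cast_succ]
    exact (add_le_add_left (ih hi.2 hj.2) 1).trans
      (height_map_quotientMk_add_one_le (segreIdeal_mono (Set.empty_subset _)) hlt)

theorem card_add_card_le_height_map_idealOfVars_add_one [Fintype ι] [Fintype κ]
    [Nonempty ι] [Nonempty κ] :
    (Fintype.card ι + Fintype.card κ : ℕ) ≤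
      ((idealOfVars (ι × κ) R).map (Ideal.Quotient.mk (segreIdeal R ∅))).height + 1 := by
  classical
  obtain ⟨i⟩ := ‹Nonempty ι›
  obtain ⟨j⟩ := ‹Nonempty κ›
  let T : Finset (ι ⊕ κ) := {Sum.inl i, Sum.inr j}ᶜ
  have hi : Sum.inl i ∉ T := by simp [T]
  have hj : Sum.inr j ∉ T := by simp [T]
  have hcard : Fintype.card ι + Fintype.card κ = T.card + 1 + 1 := by
    rw [← Fintype.card_sum, ← Finset.card_compl_add_card {Sum.inl i, Sum.inr j},
      Finset.card_pair (by simp)]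
  have hlt : segreIdeal R (T : Set (ι ⊕ κ)) < idealOfVars (ι × κ) R :=
    segreIdeal_univ (R := R) ▸ segreIdeal_lt (Set.subset_univ _) hi hj (by simp)
  rw [hcard]
  push_cast
  gcongr
  exact (add_le_add_left (card_le_height_map_segreIdeal T hi hj) 1).trans
    (height_map_quotientMk_add_one_le (segreIdeal_mono (Set.empty_subset _)) hlt)

theorem mul_eq_mul_of_mem_zeroLocus_segreIdeal {K : Type*} [Field K]
    {z : ι × κ → K} (hz : z ∈ zeroLocus K (segreIdeal K ∅)) (i a : ι) (j b : κ) :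
    z (i, b) * z (a, j) = z (a, b) * z (i, j) := by
  have hminor : X (i, b) * X (a, j) - X (a, b) * X (i, j) ∈ segreIdeal K ∅ := by
    simp only [segreIdeal, segreHom, RingHom.mem_ker, AlgHom.comp_apply, map_sub, map_mul, aeval_X]
    ring
  simpa [sub_eq_zero] using hz _ hminor

theorem exists_apply_eq_zero_of_finrank_add_one_lt {K U V W : Type*} [Field K] [IsAlgClosed K]
    [AddCommGroup U] [Module K U] [FiniteDimensional K U] [Nontrivial U]
    [AddCommGroup V] [Module K V] [FiniteDimensional K V] [Nontrivial V]
    [AddCommGroup W] [Module K W] [FiniteDimensional K W]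
    (B : U →ₗ[K] V →ₗ[K] W) (hdim : finrank K W + 1 < finrank K U + finrank K V) :
    ∃ u ≠ 0, ∃ v ≠ 0, B u v = 0 := by
  let bU := finBasis K U
  let bV := finBasis K V
  have := bU.index_nonempty
  have := bV.index_nonempty
  let φ := Fintype.linearCombination K fun p : Fin (finrank K U) × Fin (finrank K V) =>
    B (bU p.1) (bV p.2)
  have hheight : finrank K W < ((idealOfVars (Fin (finrank K U) × Fin (finrank K V)) K).map
      (Ideal.Quotient.mk (segreIdeal K ∅))).height := by
    have h := card_add_card_le_height_map_idealOfVars_add_one (R := K) (ι := Fin (finrank K U))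
      (κ := Fin (finrank K V))
    rw [Fintype.card_fin, Fintype.card_fin] at h
    refine lt_of_add_lt_add_right (a := 1) (lt_of_lt_of_le ?_ h)
    exact_mod_cast hdim
  obtain ⟨z, hz, hz0, hφz⟩ := exists_ne_zero_mem_zeroLocus_of_finrank_lt_height
    (segreIdeal_univ (R := K) ▸ segreIdeal_mono (Set.empty_subset _)) φ hheight
  obtain ⟨⟨a, b⟩, hab⟩ := Function.ne_iff.mp hz0
  refine ⟨∑ i, z (i, b) • bU i, fun h => hab ?_, ∑ j, z (a, j) • bV j, fun h => hab ?_, ?_⟩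
  · exact Fintype.linearIndependent_iff.mp bU.linearIndependent _ h a
  · exact Fintype.linearIndependent_iff.mp bV.linearIndependent _ h b
  calc B (∑ i, z (i, b) • bU i) (∑ j, z (a, j) • bV j)
      = ∑ i, ∑ j, (z (i, b) * z (a, j)) • B (bU i) (bV j) := by
        rw [map_sum B, LinearMap.sum_apply]
        simp [smul_smul, mul_comm]
    _ = z (a, b) • φ z := by
        simp_rw [fun i j => mul_eq_mul_of_mem_zeroLocus_segreIdeal hz i a j b, mul_smul,
          ← Finset.smul_sum]
        rw [Fintype.linearCombination_apply, Fintype.sum_prod_type]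
    _ = 0 := by rw [hφz, smul_zero]

end Segre

section Rank

variable {K ι κ : Type*} [Field K] [Fintype κ]

theorem rank_smul_le (c : K) (M : Matrix ι κ K) : (c • M).rank ≤ M.rank := by
  classical
  rw [smul_eq_mul_diagonal]
  exact rank_mul_le_left _ _

variable [Fintype ι]

theorem rank_lt_card_iff_exists_vecMul_eq_zero (M : Matrix ι κ K) :
    M.rank < Fintype.card ι ↔ ∃ x ≠ 0, x ᵥ* M = 0 := by
  have hker : M.rank < Fintype.card ι ↔ ¬ Function.Injective M.vecMulLinear := by
    rw [coe_vecMulLinear, vecMul_injective_iff, linearIndependent_iff_card_eq_finrank_span,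
      Set.finrank, ← rank_eq_finrank_span_row, M.rank_le_card_height.lt_iff_ne, ne_comm]
  rw [hker, injective_iff_map_eq_zero]
  simp [and_comm]

theorem rank_lt_card_iff_forall_det_mul_eq_zero [DecidableEq ι] (M : Matrix ι κ K) :
    M.rank < Fintype.card ι ↔ ∀ N : Matrix κ ι K, (M * N).det = 0 := by
  constructor
  · intro hrank N
    by_contra hdet
    exact (rank_of_det_ne_zero hdet ▸ rank_mul_le_left M N).not_gt hrank
  · intro hdet
    by_contra! hrank
    have hsurj : Function.Surjective M.mulVec := LinearMap.range_eq_top.mp <|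
      Submodule.eq_top_of_finrank_eq (S := LinearMap.range M.mulVecLin) <| by
        rw [finrank_fintype_fun_eq_card]
        exact M.rank_le_card_height.antisymm hrank
    obtain ⟨N, hN⟩ := mulVec_surjective_iff_exists_right_inverse.mp hsurj
    simpa [hN] using hdet N

end Rank

section Determinantal

variable {K ι κ : Type*} [Field K] [Fintype ι] [Fintype κ]

theorem exists_mem_zeroLocus_iff_rank_lt {σ : Type*} [Finite σ]
    (D : (σ → K) →ₗ[K] Matrix ι κ K) :
    ∃ I : Ideal (MvPolynomial σ K),
      ∀ z, z ∈ zeroLocus K I ↔ (D z).rank < Fintype.card ι := by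
  classical
  have := Fintype.ofFinite σ
  let entries : Matrix ι κ (MvPolynomial σ K) := Matrix.of fun i j =>
    D.toMvPolynomial (Pi.basisFun K σ) (Matrix.stdBasis K ι κ) (i, j)
  have aeval_entries (z : σ → K) : entries.map (aeval z) = D z := by
    ext i j
    exact aeval_toMvPolynomial_basisFun D (Matrix.stdBasis K ι κ) (i, j) z
  let minor (N : Matrix κ ι K) : MvPolynomial σ K :=
    (entries * N.map (C : K → MvPolynomial σ K) : Matrix ι ι (MvPolynomial σ K)).det
  have aeval_minor (z : σ → K) (N : Matrix κ ι K) : aeval z (minor N) = (D z * N).det := by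
    simp only [minor]
    rw [AlgHom.map_det, AlgHom.mapMatrix_apply, Matrix.map_mul, aeval_entries, Matrix.map_map]
    congr 2
    ext
    simp
  refine ⟨Ideal.span (Set.range minor), fun z => ?_⟩
  rw [zeroLocus_span, rank_lt_card_iff_forall_det_mul_eq_zero]
  simp only [Set.mem_ofPred_eq, Set.forall_mem_range, aeval_minor]

theorem finite_setOf_rank_lt_coord_eq_one [IsAlgClosed K] {σ V : Type*} [Finite σ] [AddCommGroup V]
    [Module K V] (D : V →ₗ[K] Matrix ι κ K) (b : Basis σ K V) (s : σ)
    (hinf : ∀ v, b.repr v s = 0 → (D v).rank < Fintype.card ι → v = 0) :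
    {v | (D v).rank < Fintype.card ι ∧ b.repr v s = 1}.Finite := by
  have := Fintype.ofFinite σ
  obtain ⟨I, hI⟩ := exists_mem_zeroLocus_iff_rank_lt (D ∘ₗ b.equivFun.symm.toLinearMap)
  have hfin := finite_setOf_mem_zeroLocus_coord_eq_one (I := I) (i := s)
    (fun z hz c => by
      rw [hI, map_smul]
      exact (rank_smul_le c _).trans_lt ((hI z).mp hz))
    (fun z hz hzs => by
      refine b.equivFun.symm.map_eq_zero_iff.mp (hinf _ ?_ ((hI z).mp hz))
      rw [← b.equivFun_apply, LinearEquiv.apply_symm_apply]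
      exact hzs)
  refine (hfin.preimage b.equivFun.injective.injOn).subset fun v hv => ?_
  refine ⟨(hI _).mpr ?_, hv.2⟩
  rw [LinearMap.comp_apply, LinearEquiv.coe_coe, LinearEquiv.symm_apply_apply]
  exact hv.1

end Determinantal

section Pencil

variable {K ι κ : Type*} [Field K]

/-- The linear map `(c, l) ↦ c • A + l`, which homogenizes the affine family `A + L` (the slice
`c = 1`). -/
def affinePencil (A : Matrix ι κ K) (L : Submodule K (Matrix ι κ K)) :
    K × L →ₗ[K] Matrix ι κ K :=
  (LinearMap.toSpanSingleton K _ A).coprod L.subtype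

theorem affinePencil_apply (A : Matrix ι κ K) (L : Submodule K (Matrix ι κ K)) (v : K × L) :
    affinePencil A L v = v.1 • A + v.2 := by
  simp [affinePencil]

variable [Fintype ι] [Fintype κ] {L : Submodule K (Matrix ι κ K)}

theorem eq_zero_of_rank_affinePencil_lt (hfull : ∀ B ∈ L, B ≠ 0 → B.rank = Fintype.card ι)
    (A : Matrix ι κ K) {v : K × L} (hv : v.1 = 0)
    (hrank : (affinePencil A L v).rank < Fintype.card ι) : v = 0 := by
  rw [affinePencil_apply, hv, zero_smul, zero_add] at hrank
  refine Prod.ext hv (Subtype.ext ?_)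
  by_contra hne
  exact hrank.ne (hfull v.2 v.2.2 hne)

variable [IsAlgClosed K]

theorem finite_setOf_mem_rank_add_lt (hfull : ∀ B ∈ L, B ≠ 0 → B.rank = Fintype.card ι)
    (A : Matrix ι κ K) : {l | l ∈ L ∧ (A + l).rank < Fintype.card ι}.Finite := by
  let b := (Basis.singleton Unit K).prod (finBasis K L)
  have hb (v : K × L) : b.repr v (Sum.inl ()) = v.1 := by simp [b]
  have hfin := finite_setOf_rank_lt_coord_eq_one (affinePencil A L) b (Sum.inl ())
    fun v hv => eq_zero_of_rank_affinePencil_lt hfull A (hb v ▸ hv)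
  refine (hfin.image fun v => (v.2 : Matrix ι κ K)).subset ?_
  rintro l ⟨hl, hrank⟩
  exact ⟨(1, ⟨l, hl⟩), by simpa [hb, affinePencil_apply] using hrank, rfl⟩

theorem nonempty_setOf_mem_rank_add_lt (hdim : Fintype.card κ < finrank K L + Fintype.card ι)
    (hfull : ∀ B ∈ L, B ≠ 0 → B.rank = Fintype.card ι) (A : Matrix ι κ K) :
    {l | l ∈ L ∧ (A + l).rank < Fintype.card ι}.Nonempty := by
  have : Nonempty ι := by
    by_contra hι
    rw [not_nonempty_iff] at hι
    simp [finrank_zero_of_subsingleton] at hdim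
  obtain ⟨x, hx, v, hv, hxv⟩ := exists_apply_eq_zero_of_finrank_add_one_lt
    ((vecMulBilin K K).compl₂ (affinePencil A L))
    (by simp only [finrank_prod, finrank_fintype_fun_eq_card, finrank_self]; lia)
  have hrank : (affinePencil A L v).rank < Fintype.card ι :=
    (rank_lt_card_iff_exists_vecMul_eq_zero _).mpr ⟨x, hx, hxv⟩
  have hv1 : v.1 ≠ 0 := fun h => hv (eq_zero_of_rank_affinePencil_lt hfull A h hrank)
  refine ⟨v.1⁻¹ • v.2, L.smul_mem _ v.2.2, ?_⟩
  have hscale : A + v.1⁻¹ • (v.2 : Matrix ι κ K) = v.1⁻¹ • affinePencil A L v := by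
    rw [affinePencil_apply, smul_add, inv_smul_smul₀ hv1]
  exact hscale ▸ (rank_smul_le _ _).trans_lt hrank

theorem eigenvalue_locus_finite_nonempty_general
    (hdim : Fintype.card κ < finrank K L + Fintype.card ι)
    (hfull : ∀ B ∈ L, B ≠ 0 → B.rank = Fintype.card ι) (A : Matrix ι κ K) :
    {l | l ∈ L ∧ (A + l).rank < Fintype.card ι}.Finite ∧
      {l | l ∈ L ∧ (A + l).rank < Fintype.card ι}.Nonempty :=
  ⟨finite_setOf_mem_rank_add_lt hfull A, nonempty_setOf_mem_rank_add_lt hdim hfull A⟩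

end Pencil

/-- **Lemma 1**: if `L ⊆ M(m,n)` is an `(n-m+1)`-dimensional complex subspace all of
whose nonzero elements have full rank `m` (i.e. `L` is transversal to the determinantal
variety `M¹`), then for every matrix `A` the eigenvalue locus
`{l ∈ L : rank (A + l) < m}` is finite and nonempty. -/
theorem eigenvalue_locus_finite_nonempty (m n : ℕ) (hm : 0 < m) (hmn : m ≤ n)
    (L : Submodule ℂ (Matrix (Fin m) (Fin n) ℂ))
    (hdim : Module.finrank ℂ L = n - m + 1)
    (hfull : ∀ B ∈ L, B ≠ 0 → B.rank = m) :
    ∀ A : Matrix (Fin m) (Fin n) ℂ,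
      {l : Matrix (Fin m) (Fin n) ℂ | l ∈ L ∧ (A + l).rank < m}.Finite ∧
      {l : Matrix (Fin m) (Fin n) ℂ | l ∈ L ∧ (A + l).rank < m}.Nonempty := by
  simpa using eigenvalue_locus_finite_nonempty_general (L := L)
    (by rw [Fintype.card_fin, Fintype.card_fin]; lia) (by simpa)
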